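/- Let n and j be positive integers with 4j ≤ n, let M be distributed according to the Haar probability measure on U(n,ℂ), and set W = (Tr(M^j) + conj(Tr(M^j)))/√(2j), a real random variable. Then the first four moments of W match those of a standard normal random variable: E[W] = 0, E[W²] = 1, E[W³] = 0, and E[W⁴] = 3. -/

import Mathlib

open MeasureTheory ProbabilityTheory Matrix

/-- Matrices over a measurable space of entries carry the product σ-algebra
(the Borel σ-algebra, for matrices over `ℝ` or `ℂ`). -/
instance matrixMeasurableSpace {m n α : Type*} [MeasurableSpace α] :
    MeasurableSpace (Matrix m n α) :=
  inferInstanceAs (MeasurableSpace (m → n → α))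

/-- The trace of the `k`-th power (`k : ℤ`, negative powers via the inverse) of an
element of the unitary group `U(n,ℂ)`. -/
noncomputable def trU {n : ℕ} (M : Matrix.unitaryGroup (Fin n) ℂ) (k : ℤ) : ℂ :=
  Matrix.trace (((M ^ k : Matrix.unitaryGroup (Fin n) ℂ)) : Matrix (Fin n) (Fin n) ℂ)

/-- The standard normal cumulative distribution function
`Φ(x₀) = (1/√(2π)) ∫_{-∞}^{x₀} e^{-x²/2} dx`. -/
noncomputable def Phi (x₀ : ℝ) : ℝ :=
  (Real.sqrt (2 * Real.pi))⁻¹ * ∫ x in Set.Iic x₀, Real.exp (-x ^ 2 / 2)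

/-! ## Combinatorics -/

/-- The factor `z_λ`. -/
noncomputable def zfac (s : Multiset ℕ) : ℂ :=
  s.prod * ∏ a ∈ s.toFinset, ((s.count a).factorial : ℂ)

lemma zfac_zero : zfac 0 = 1 := by simp [zfac]

lemma zfac_cons (k : ℕ) (s : Multiset ℕ) :
    zfac (k ::ₘ s) = k * (s.count k + 1) * zfac s := by
  unfold zfac
  have h1 : ∏ a ∈ s.toFinset, ((s.count a).factorial : ℂ)
      = ∏ a ∈ insert k s.toFinset, ((s.count a).factorial : ℂ) := by
    apply Finset.prod_subset (Finset.subset_insert _ _)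
    intro a _ ha
    have : s.count a = 0 := by
      rw [Multiset.count_eq_zero]; simpa using ha
    simp [this]
  rw [h1, Multiset.toFinset_cons, Finset.prod_eq_mul_prod_sdiff_singleton_of_mem (Finset.mem_insert_self k _),
    Finset.prod_eq_mul_prod_sdiff_singleton_of_mem (Finset.mem_insert_self k _)]
  have h2 : ∏ a ∈ insert k s.toFinset \ {k}, (((k ::ₘ s).count a).factorial : ℂ)
      = ∏ a ∈ insert k s.toFinset \ {k}, ((s.count a).factorial : ℂ) := by
    apply Finset.prod_congr rfl
    intro a ha
    have : a ≠ k := by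
      simp at ha; exact ha.2
    rw [Multiset.count_cons_of_ne this]
  rw [h2, Multiset.count_cons_self, Multiset.prod_cons, Nat.factorial_succ]
  push_cast
  ring

/-- The Gaussian moments. -/
noncomputable def gmom (s t : Multiset ℕ) : ℂ := if s = t then zfac s else 0

lemma gmom_comm (s t : Multiset ℕ) : gmom s t = gmom t s := by
  unfold gmom
  by_cases h : s = t
  · simp [h]
  · simp [h, Ne.symm h]

lemma gmom_cons (k : ℕ) (s t : Multiset ℕ) :
    gmom (k ::ₘ s) t = k * t.count k * gmom s (t.erase k) := by
  by_cases hk : k ∈ t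
  · obtain ⟨u, rfl⟩ := Multiset.exists_cons_of_mem hk
    simp only [gmom, Multiset.cons_inj_right, Multiset.erase_cons_head, Multiset.count_cons_self]
    split_ifs with h
    · rw [zfac_cons, h]; push_cast; ring
    · simp
  · have : k ::ₘ s ≠ t := by rintro rfl; simp at hk
    simp [gmom, this, Multiset.count_eq_zero.2 hk]

lemma gmom_cons_right (k : ℕ) (s t : Multiset ℕ) :
    gmom s (k ::ₘ t) = k * s.count k * gmom (s.erase k) t := by
  rw [gmom_comm, gmom_cons, gmom_comm]

lemma msum_eq (s : Multiset ℕ) (N : ℕ) (h : ∀ a ∈ s, a < N) (f : ℕ → ℂ) :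
    (s.map f).sum = ∑ a ∈ Finset.range N, (s.count a : ℂ) * f a := by
  rw [Finset.sum_multiset_map_count]
  simp only [nsmul_eq_mul]
  apply Finset.sum_subset
  · intro a ha; simp at ha ⊢; exact h a ha
  · intro a _ ha
    have : s.count a = 0 := by
      rw [Multiset.count_eq_zero]; simpa using ha
    simp [this]

/-- The right hand side summand in the loop equation. -/
noncomputable def rhsTerm (n : ℕ) (F : Multiset ℕ → Multiset ℕ → ℂ) (k : ℕ) (s t : Multiset ℕ)
    (m : ℕ) : ℂ :=
  if m < k then F ((k - m) ::ₘ s) (t.erase m) else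
    if m = k then n * F s (t.erase m) else F s ((m - k) ::ₘ t.erase m)

lemma gmom_loop (n k : ℕ) (hk : 0 < k) (s t : Multiset ℕ) :
    n * gmom (k ::ₘ s) t + ∑ l ∈ Finset.Ico 1 k, gmom (l ::ₘ (k - l) ::ₘ s) t
      + (s.map fun m : ℕ => (m : ℂ) * gmom ((k + m) ::ₘ s.erase m) t).sum
      = (t.map fun m : ℕ => (m : ℂ) * rhsTerm n gmom k s t m).sum := by
  obtain ⟨N, hsN, htN⟩ : ∃ N, (∀ a ∈ s, a < N) ∧ (∀ a ∈ t, a < N) := by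
    refine ⟨s.sum + t.sum + 1, fun a ha => ?_, fun a ha => ?_⟩
    · have := Multiset.le_sum_of_mem ha; omega
    · have := Multiset.le_sum_of_mem ha; omega
  rw [msum_eq s N hsN, msum_eq t (k + 1 + N) (fun a ha => by have := htN a ha; omega)]
  rw [Finset.sum_range_add, Finset.sum_range_succ, Finset.range_eq_Ico,
    Finset.range_eq_Ico, Finset.sum_eq_sum_Ico_succ_bot hk]
  simp only [CharP.cast_eq_zero, zero_mul, mul_zero, zero_add]
  have e1 : ∑ l ∈ Finset.Ico 1 k, gmom (l ::ₘ (k - l) ::ₘ s) t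
      = ∑ l ∈ Finset.Ico 1 k, (t.count l : ℂ) * ((l : ℂ) * rhsTerm n gmom k s t l) := by
    apply Finset.sum_congr rfl
    intro l hl
    rw [Finset.mem_Ico] at hl
    rw [gmom_cons, rhsTerm, if_pos hl.2]; ring
  have e2 : n * gmom (k ::ₘ s) t = (t.count k : ℂ) * ((k : ℂ) * rhsTerm n gmom k s t k) := by
    rw [gmom_cons, rhsTerm, if_neg (lt_irrefl _), if_pos rfl]; ring
  have e3 : ∑ a ∈ Finset.Ico 0 N, (s.count a : ℂ) * ((a : ℂ) * gmom ((k + a) ::ₘ s.erase a) t)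
      = ∑ x ∈ Finset.Ico 0 N, (t.count (k + 1 + x) : ℂ) * (((k + 1 + x : ℕ) : ℂ) *
        rhsTerm n gmom k s t (k + 1 + x)) := by
    have hR : ∀ x, (t.count (k + 1 + x) : ℂ) * (((k + 1 + x : ℕ) : ℂ) *
        rhsTerm n gmom k s t (k + 1 + x)) = (s.count (x + 1) : ℂ) * (((x + 1 : ℕ) : ℂ) *
          gmom ((k + (x + 1)) ::ₘ s.erase (x + 1)) t) := by
      intro x
      rw [rhsTerm, if_neg (by omega), if_neg (by omega), gmom_cons, gmom_cons_right]
      have : k + 1 + x - k = x + 1 := by omega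
      rw [this]
      have : k + 1 + x = k + (x + 1) := by omega
      rw [this]; ring
    simp only [hR, ← Finset.range_eq_Ico]
    have := Finset.sum_range_succ' (fun a => (s.count a : ℂ) * ((a : ℂ) * gmom ((k + a) ::ₘ s.erase a) t)) N
    rw [Finset.sum_range_succ] at this
    have hN : s.count N = 0 := by
      rw [Multiset.count_eq_zero]; intro h; exact lt_irrefl _ (hsN N h)
    simpa [hN] using this
  rw [e1, e2, e3]
  ring

/-- Abstract uniqueness: loop equation determines the moments. -/
lemma loop_unique (n : ℕ) (E : Multiset ℕ → Multiset ℕ → ℂ)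
    (h0 : ∀ t, (∀ m ∈ t, 0 < m) → E 0 t = gmom 0 t)
    (hE : ∀ k, 0 < k → ∀ s t, n * E (k ::ₘ s) t
      + ∑ l ∈ Finset.Ico 1 k, E (l ::ₘ (k - l) ::ₘ s) t
      + (s.map fun m : ℕ => (m : ℂ) * E ((k + m) ::ₘ s.erase m) t).sum
      = (t.map fun m : ℕ => (m : ℂ) * rhsTerm n E k s t m).sum) :
    ∀ d, d ≤ n → ∀ s, (∀ m ∈ s, 0 < m) → s.sum = d → ∀ t, (∀ m ∈ t, 0 < m) →
      E s t = gmom s t := by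
  intro d
  induction d using Nat.strong_induction_on with
  | _ d ih =>
  intro hd s hs hsd t ht
  rcases Nat.eq_zero_or_pos d with hd0 | hdpos
  · have : s = 0 := by
      rw [Multiset.eq_zero_iff_forall_notMem]
      intro a ha
      have := Multiset.le_sum_of_mem ha
      have := hs a ha
      omega
    rw [this]; exact h0 t ht
  obtain ⟨q, hq⟩ := Finite.exists_max
    (fun q : Nat.Partition d => ‖E q.parts t - gmom q.parts t‖)
  set C := ‖E q.parts t - gmom q.parts t‖ with hC
  have hmax : ∀ s' : Multiset ℕ, (∀ m ∈ s', 0 < m) → s'.sum = d → ‖E s' t - gmom s' t‖ ≤ C := by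
    intro s' h1 h2
    exact hq ⟨s', fun {i} hi => h1 i hi, h2⟩
  suffices hC0 : C ≤ 0 by
    have := (hmax s hs hsd).trans hC0
    exact sub_eq_zero.1 (norm_le_zero_iff.1 this)
  have hne : q.parts ≠ 0 := by
    intro h
    have := q.parts_sum
    rw [h] at this; simp at this; omega
  obtain ⟨k, hkm⟩ := Multiset.exists_mem_of_ne_zero hne
  obtain ⟨r, hr⟩ := Multiset.exists_cons_of_mem hkm
  have hk : 0 < k := q.parts_pos hkm
  have hrpos : ∀ m ∈ r, 0 < m := fun m hm => q.parts_pos (by rw [hr]; simp [hm])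
  have hrsum : k + r.sum = d := by have := q.parts_sum; rw [hr] at this; simpa using this
  have eqE := hE k hk r t
  have eqG := gmom_loop n k hk r t
  have hrhs : (t.map fun m : ℕ => (m : ℂ) * rhsTerm n E k r t m).sum
      = (t.map fun m : ℕ => (m : ℂ) * rhsTerm n gmom k r t m).sum := by
    congr 1
    apply Multiset.map_congr rfl
    intro m hm
    have hmpos := ht m hm
    have htm : ∀ x ∈ t.erase m, 0 < x := fun x hx => ht x (Multiset.mem_of_mem_erase hx)
    congr 1
    unfold rhsTerm
    split_ifs with h1 h2
    · apply ih (d - m) (by omega) (by omega) _ _ _ _ htm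
      · intro x hx
        rcases Multiset.mem_cons.1 hx with rfl | hx
        · omega
        · exact hrpos x hx
      · rw [Multiset.sum_cons]; omega
    · rw [ih (d - k) (by omega) (by omega) r hrpos (by omega) _ htm]
    · apply ih (d - k) (by omega) (by omega) r hrpos (by omega)
      intro x hx
      rcases Multiset.mem_cons.1 hx with rfl | hx
      · omega
      · exact htm x hx
  have key : n * (E (k ::ₘ r) t - gmom (k ::ₘ r) t)
      = -(∑ l ∈ Finset.Ico 1 k, (E (l ::ₘ (k - l) ::ₘ r) t - gmom (l ::ₘ (k - l) ::ₘ r) t)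
        + (r.map fun m : ℕ => (m : ℂ) * (E ((k + m) ::ₘ r.erase m) t
            - gmom ((k + m) ::ₘ r.erase m) t)).sum) := by
    rw [hrhs] at eqE
    simp only [mul_sub, Multiset.sum_map_sub, Finset.sum_sub_distrib]
    linear_combination eqE - eqG
  have b1 : ‖∑ l ∈ Finset.Ico 1 k, (E (l ::ₘ (k - l) ::ₘ r) t - gmom (l ::ₘ (k - l) ::ₘ r) t)‖
      ≤ (k - 1 : ℝ) * C := by
    have : ((k - 1 : ℝ)) * C = ∑ l ∈ Finset.Ico 1 k, C := by
      simp [Nat.cast_sub (show 1 ≤ k from hk)]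
    rw [this]
    apply norm_sum_le_of_le
    intro l hl
    rw [Finset.mem_Ico] at hl
    apply hmax
    · intro x hx
      rcases Multiset.mem_cons.1 hx with rfl | hx
      · omega
      rcases Multiset.mem_cons.1 hx with rfl | hx
      · omega
      · exact hrpos x hx
    · simp only [Multiset.sum_cons]; omega
  have b2gen : ∀ (u : Multiset ℕ) (f : ℕ → ℂ), (∀ m ∈ u, ‖f m‖ ≤ C) →
      ‖(u.map fun m : ℕ => (m : ℂ) * f m).sum‖ ≤ (u.sum : ℝ) * C := by
    intro u f
    induction u using Multiset.induction with
    | empty => simp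
    | cons a u ihu =>
      intro hf
      rw [Multiset.map_cons, Multiset.sum_cons, Multiset.sum_cons]
      have h1 := ihu (fun m hm => hf m (Multiset.mem_cons_of_mem hm))
      have h2 := hf a (Multiset.mem_cons_self _ _)
      refine (norm_add_le _ _).trans ?_
      rw [norm_mul]
      rw [Nat.cast_add]
      have : ‖(a : ℂ)‖ = a := by simp
      rw [this, add_mul]
      gcongr
  have b2 := b2gen r (fun m => E ((k + m) ::ₘ r.erase m) t - gmom ((k + m) ::ₘ r.erase m) t) (by
    intro m hm
    apply hmax
    · intro x hx
      rcases Multiset.mem_cons.1 hx with rfl | hx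
      · omega
      · exact hrpos x (Multiset.mem_of_mem_erase hx)
    · have := Multiset.sum_erase hm
      rw [Multiset.sum_cons]; omega)
  have hn : (n : ℝ) * C ≤ (k - 1 : ℝ) * C + (r.sum : ℝ) * C := by
    have : (n : ℝ) * C = ‖(n : ℂ) * (E (k ::ₘ r) t - gmom (k ::ₘ r) t)‖ := by
      rw [norm_mul, ← hr, ← hC]; simp
    rw [this, key, norm_neg]
    exact (norm_add_le _ _).trans (add_le_add b1 b2)
  have hd' : (k : ℝ) + r.sum ≤ n := by
    rw [← hrsum] at hd; exact_mod_cast hd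
  have hCnn : 0 ≤ C := norm_nonneg _
  nlinarith

/-! ## Analysis -/
section Analysis

attribute [local instance] Matrix.linftyOpNormedRing Matrix.linftyOpNormedAlgebra
  Matrix.linftyOpNormedAddCommGroup Matrix.linftyOpNormedSpace

/-- Borel structure on complex matrices. -/
instance matBorel (n : ℕ) : BorelSpace (Matrix (Fin n) (Fin n) ℂ) :=
  inferInstanceAs (BorelSpace (Fin n → Fin n → ℂ))

instance unitaryCompact (n : ℕ) : CompactSpace (unitaryGroup (Fin n) ℂ) := by
  suffices hc : IsCompact ((unitaryGroup (Fin n) ℂ : Submonoid _) : Set (Matrix (Fin n) (Fin n) ℂ)) from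
    isCompact_iff_compactSpace.1 hc
  have hK : IsCompact (Set.pi Set.univ fun _ : Fin n => Set.pi Set.univ fun _ : Fin n =>
      Metric.closedBall (0 : ℂ) 1) :=
    isCompact_univ_pi fun _ => isCompact_univ_pi fun _ => isCompact_closedBall _ _
  refine IsCompact.of_isClosed_subset (X := Matrix (Fin n) (Fin n) ℂ) hK ?_ ?_
  · have : ((unitaryGroup (Fin n) ℂ : Submonoid _) : Set (Matrix (Fin n) (Fin n) ℂ))
        = {A | A * star A = 1} := by
      ext A; exact mem_unitaryGroup_iff
    rw [this]
    exact isClosed_eq (by fun_prop) continuous_const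
  · intro A hA i _ j _
    simpa using entry_norm_bound_of_unitary hA i j

variable {n : ℕ}

/-- trace of powers -/
noncomputable def pw (k : ℕ) (M : unitaryGroup (Fin n) ℂ) : ℂ :=
  trace ((M : Matrix (Fin n) (Fin n) ℂ) ^ k)

/-- trace of powers of the adjoint -/
noncomputable def qw (k : ℕ) (M : unitaryGroup (Fin n) ℂ) : ℂ :=
  trace ((star (M : Matrix (Fin n) (Fin n) ℂ)) ^ k)

/-- product of `pw` -/
noncomputable def PW (s : Multiset ℕ) (M : unitaryGroup (Fin n) ℂ) : ℂ :=
  (s.map fun k => pw k M).prod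

/-- product of `qw` -/
noncomputable def QW (s : Multiset ℕ) (M : unitaryGroup (Fin n) ℂ) : ℂ :=
  (s.map fun k => qw k M).prod

lemma PW_cons (k : ℕ) (s : Multiset ℕ) (M : unitaryGroup (Fin n) ℂ) :
    PW (k ::ₘ s) M = pw k M * PW s M := by simp [PW]

lemma QW_cons (k : ℕ) (s : Multiset ℕ) (M : unitaryGroup (Fin n) ℂ) :
    QW (k ::ₘ s) M = qw k M * QW s M := by simp [QW]

lemma qw_eq (k : ℕ) (M : unitaryGroup (Fin n) ℂ) : qw k M = (starRingEnd ℂ) (pw k M) := by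
  unfold qw pw
  rw [← star_pow, star_eq_conjTranspose, trace_conjTranspose]; rfl

lemma pw_zero (M : unitaryGroup (Fin n) ℂ) : pw 0 M = n := by simp [pw]

@[fun_prop] lemma continuous_pw (k : ℕ) : Continuous (pw (n := n) k) := by
  unfold pw; fun_prop

@[fun_prop] lemma continuous_qw (k : ℕ) : Continuous (qw (n := n) k) := by
  unfold qw; fun_prop

@[fun_prop] lemma continuous_PW (s : Multiset ℕ) : Continuous (PW (n := n) s) := by
  unfold PW
  exact continuous_multiset_prod s fun i _ => continuous_pw i

@[fun_prop] lemma continuous_QW (s : Multiset ℕ) : Continuous (QW (n := n) s) := by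
  unfold QW
  exact continuous_multiset_prod s fun i _ => continuous_qw i

lemma cont_msum {X : Type*} [TopologicalSpace X] (s : Multiset ℕ) (f : ℕ → X → ℂ)
    (hf : ∀ i, Continuous (f i)) : Continuous fun x => (s.map fun i => f i x).sum :=
  continuous_multiset_sum s fun i _ => hf i

lemma integrable_cont (μ : Measure (unitaryGroup (Fin n) ℂ)) [IsProbabilityMeasure μ]
    {f : unitaryGroup (Fin n) ℂ → ℂ} (hf : Continuous f) : Integrable f μ := by
  exact hf.integrable_of_hasCompactSupport (HasCompactSupport.of_compactSpace f)

/-- one-parameter subgroup -/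
noncomputable def uexp (X : Matrix (Fin n) (Fin n) ℂ) (hX : X ∈ skewAdjoint (Matrix (Fin n) (Fin n) ℂ))
    (t : ℝ) : unitaryGroup (Fin n) ℂ :=
  ⟨NormedSpace.exp (t • X), by
    rw [mem_unitaryGroup_iff, star_eq_conjTranspose, ← Matrix.exp_conjTranspose]
    rw [skewAdjoint.mem_iff, star_eq_conjTranspose] at hX
    rw [conjTranspose_smul, hX, smul_neg, Matrix.exp_neg]
    simp only [star_trivial]
    exact Matrix.mul_nonsing_inv _ ((Matrix.isUnit_iff_isUnit_det _).1 (Matrix.isUnit_exp _))⟩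

lemma uexp_add (X : Matrix (Fin n) (Fin n) ℂ) (hX) (s t : ℝ) :
    uexp X hX (s + t) = uexp X hX s * uexp X hX t := by
  apply Subtype.ext
  change NormedSpace.exp _ = NormedSpace.exp _ * NormedSpace.exp _
  rw [add_smul, Matrix.exp_add_of_commute]
  exact (Commute.refl X).smul_left s |>.smul_right t

lemma uexp_zero (X : Matrix (Fin n) (Fin n) ℂ) (hX) : uexp X hX 0 = 1 := by
  apply Subtype.ext
  change NormedSpace.exp _ = _
  simp

lemma uexp_deriv (X : Matrix (Fin n) (Fin n) ℂ) (hX) :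
    HasDerivAt (fun t => (uexp X hX t : Matrix (Fin n) (Fin n) ℂ)) X 0 := by
  have := hasDerivAt_exp_smul_const (𝕂 := ℝ) X 0
  rw [zero_smul, NormedSpace.exp_zero, one_mul] at this
  exact this

/-- infinitesimal invariance of Haar measure -/
lemma integral_deriv_zero (μ : Measure (unitaryGroup (Fin n) ℂ)) [IsProbabilityMeasure μ]
    [μ.IsHaarMeasure] (X : Matrix (Fin n) (Fin n) ℂ) (hX)
    (f f' : unitaryGroup (Fin n) ℂ → ℂ) (hf : Continuous f) (hf' : Continuous f')
    (hd : ∀ M, HasDerivAt (fun t => f (uexp X hX t * M)) (f' M) 0) :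
    ∫ M, f' M ∂μ = 0 := by
  obtain ⟨C, hC⟩ : ∃ C, ∀ M, ‖f' M‖ ≤ C := by
    obtain ⟨C, hC⟩ := isCompact_univ.exists_bound_of_continuousOn hf'.continuousOn
    exact ⟨C, fun M => hC M trivial⟩
  have hd' : ∀ M (t : ℝ), HasDerivAt (fun t => f (uexp X hX t * M)) (f' (uexp X hX t * M)) t := by
    intro M t
    have h1 := hd (uexp X hX t * M)
    have h2 : HasDerivAt (fun s : ℝ => s - t) 1 t := (hasDerivAt_id t).sub_const t
    have h3 := HasDerivAt.scomp (h := fun s : ℝ => s - t) t (by simpa using h1) h2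
    rw [one_smul] at h3
    refine h3.congr_of_eventuallyEq (Filter.Eventually.of_forall fun s => ?_)
    simp only [Function.comp]
    rw [← mul_assoc, ← uexp_add]; congr 3; ring
  have := hasDerivAt_integral_of_dominated_loc_of_deriv_le (μ := μ) (x₀ := (0 : ℝ)) (s := Set.univ)
    (F := fun t M => f (uexp X hX t * M)) (F' := fun t M => f' (uexp X hX t * M))
    (bound := fun _ => C) Filter.univ_mem
    (Filter.Eventually.of_forall fun t => (by fun_prop : Continuous fun M => f (uexp X hX t * M)).aestronglyMeasurable)
    (integrable_cont μ (by fun_prop)) (by fun_prop : Continuous fun M => f' (uexp X hX 0 * M)).aestronglyMeasurable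
    (Filter.Eventually.of_forall fun M t _ => hC _)
    (integrable_const C)
    (Filter.Eventually.of_forall fun M t _ => hd' M t)
  have h2 := this.2
  simp only [integral_mul_left_eq_self, uexp_zero, one_mul] at h2
  exact h2.unique (hasDerivAt_const _ _)

lemma hasDerivAt_mprod (s : Multiset ℕ) (f : ℕ → ℝ → ℂ) (f' : ℕ → ℂ) (x : ℝ)
    (h : ∀ k, HasDerivAt (f k) (f' k) x) :
    HasDerivAt (fun t => (s.map fun k => f k t).prod)
      ((s.map fun m => f' m * ((s.erase m).map fun k => f k x).prod).sum) x := by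
  induction s using Multiset.induction with
  | empty => simpa using hasDerivAt_const x (1 : ℂ)
  | cons a s ih =>
    simp only [Multiset.map_cons, Multiset.prod_cons, Multiset.sum_cons, Multiset.erase_cons_head]
    refine ((h a).mul ih).congr_deriv ?_
    congr 1
    rw [← Multiset.sum_map_mul_left]
    congr 1
    apply Multiset.map_congr rfl
    intro m hm
    by_cases hma : m = a
    · subst hma
      rw [Multiset.erase_cons_head]
      have : (s.map fun k => f k x).prod = f m x * ((s.erase m).map fun k => f k x).prod := by
        rw [← Multiset.prod_cons, ← Multiset.map_cons (fun k => f k x), Multiset.cons_erase hm]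
      rw [this]; ring
    · rw [Multiset.erase_cons_tail_of_mem hm, Multiset.map_cons, Multiset.prod_cons]; ring

/-- derivative of a matrix power -/
noncomputable def dpow (X A : Matrix (Fin n) (Fin n) ℂ) (k : ℕ) : Matrix (Fin n) (Fin n) ℂ :=
  ∑ l ∈ Finset.range k, A ^ l * X * A ^ (k - l)

lemma hasDerivAt_pow_curve (X A : Matrix (Fin n) (Fin n) ℂ) (u : ℝ → Matrix (Fin n) (Fin n) ℂ)
    (hu0 : u 0 = 1) (hu : HasDerivAt u X 0) (k : ℕ) :
    HasDerivAt (fun t => (u t * A) ^ k) (dpow X A k) 0 := by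
  induction k with
  | zero =>
    simp only [pow_zero, dpow, Finset.range_zero, Finset.sum_empty]
    exact hasDerivAt_const (0 : ℝ) (1 : Matrix (Fin n) (Fin n) ℂ)
  | succ k ih =>
    simp only [pow_succ]
    refine (ih.mul (hu.mul_const A)).congr_deriv ?_
    rw [hu0, one_mul, dpow, dpow, Finset.sum_range_succ, Finset.sum_mul]
    congr 1
    · apply Finset.sum_congr rfl
      intro l hl
      rw [Finset.mem_range] at hl
      rw [show k + 1 - l = (k - l) + 1 by omega, pow_succ]; simp only [mul_assoc]
    · simp [mul_assoc]

lemma trace_dpow (X A : Matrix (Fin n) (Fin n) ℂ) (k : ℕ) :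
    trace (dpow X A k) = k * trace (X * A ^ k) := by
  rw [dpow, trace_sum, Finset.sum_congr rfl (g := fun _ => trace (X * A ^ k))]
  · simp
  · intro l hl
    rw [Finset.mem_range] at hl
    rw [mul_assoc, trace_mul_comm, mul_assoc, ← pow_add]
    congr 3; omega

lemma entry_hasDerivAt {u : ℝ → Matrix (Fin n) (Fin n) ℂ} {B : Matrix (Fin n) (Fin n) ℂ}
    {x : ℝ} (h : HasDerivAt u B x) (a b : Fin n) :
    HasDerivAt (fun t => u t a b) (B a b) x := by
  let L : Matrix (Fin n) (Fin n) ℂ →ₗ[ℝ] ℂ := 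
    { toFun := fun M => M a b, map_add' := fun _ _ => rfl, map_smul' := fun _ _ => rfl }
  exact (LinearMap.toContinuousLinearMap L).hasFDerivAt.comp_hasDerivAt x h

lemma trace_hasDerivAt {u : ℝ → Matrix (Fin n) (Fin n) ℂ} {B : Matrix (Fin n) (Fin n) ℂ}
    {x : ℝ} (h : HasDerivAt u B x) :
    HasDerivAt (fun t => trace (u t)) (trace B) x := by
  simp only [trace, diag]
  exact HasDerivAt.fun_sum fun i _ => entry_hasDerivAt h i i

lemma pw_deriv (X : Matrix (Fin n) (Fin n) ℂ) (hX) (M : unitaryGroup (Fin n) ℂ) (k : ℕ) :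
    HasDerivAt (fun t => pw k (uexp X hX t * M))
      (k * trace (X * (M : Matrix (Fin n) (Fin n) ℂ) ^ k)) 0 := by
  rw [← trace_dpow]
  exact trace_hasDerivAt (hasDerivAt_pow_curve X M _ (by rw [uexp_zero]; rfl) (uexp_deriv X hX) k)

lemma qw_deriv (X : Matrix (Fin n) (Fin n) ℂ) (hX) (M : unitaryGroup (Fin n) ℂ) (k : ℕ) :
    HasDerivAt (fun t => qw k (uexp X hX t * M))
      (-(k * trace (X * star (M : Matrix (Fin n) (Fin n) ℂ) ^ k))) 0 := by
  simp only [qw_eq]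
  have := (pw_deriv X hX M k).star
  refine this.congr_deriv ?_
  rw [star_mul', ← trace_conjTranspose, conjTranspose_mul, conjTranspose_pow]
  rw [skewAdjoint.mem_iff, star_eq_conjTranspose] at hX
  rw [hX, mul_neg, trace_neg, trace_mul_comm]
  simp [star_eq_conjTranspose]

/-- the integrand of the loop equation -/
noncomputable def loopI (k : ℕ) (s t : Multiset ℕ) (a b : Fin n)
    (X : Matrix (Fin n) (Fin n) ℂ) (M : unitaryGroup (Fin n) ℂ) : ℂ :=
  dpow X (M : Matrix (Fin n) (Fin n) ℂ) k a b * (PW s M * QW t M)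
  + ((M : Matrix (Fin n) (Fin n) ℂ) ^ k) a b *
    ((s.map fun m => (m * trace (X * (M : Matrix (Fin n) (Fin n) ℂ) ^ m)) * PW (s.erase m) M).sum * QW t M
    + PW s M * (t.map fun m => (-(m * trace (X * star (M : Matrix (Fin n) (Fin n) ℂ) ^ m)))
        * QW (t.erase m) M).sum)

lemma continuous_loopI (k : ℕ) (s t : Multiset ℕ) (a b : Fin n)
    (X : Matrix (Fin n) (Fin n) ℂ) : Continuous (loopI k s t a b X) := by
  unfold loopI dpow
  have h1 : Continuous fun M : unitaryGroup (Fin n) ℂ =>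
      (s.map fun m => (m * trace (X * (M : Matrix (Fin n) (Fin n) ℂ) ^ m)) * PW (s.erase m) M).sum :=
    cont_msum s _ fun i => by fun_prop
  have h2 : Continuous fun M : unitaryGroup (Fin n) ℂ =>
      (t.map fun m => (-(m * trace (X * star (M : Matrix (Fin n) (Fin n) ℂ) ^ m)))
        * QW (t.erase m) M).sum :=
    cont_msum t _ fun i => by fun_prop
  fun_prop

lemma dpow_add_smul (X Y A : Matrix (Fin n) (Fin n) ℂ) (c : ℂ) (k : ℕ) :
    dpow (X + c • Y) A k = dpow X A k + c • dpow Y A k := by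
  simp [dpow, mul_add, add_mul, Finset.sum_add_distrib, Finset.smul_sum]

lemma loopI_add_smul (k : ℕ) (s t : Multiset ℕ) (a b : Fin n)
    (X Y : Matrix (Fin n) (Fin n) ℂ) (c : ℂ) (M : unitaryGroup (Fin n) ℂ) :
    loopI k s t a b (X + c • Y) M = loopI k s t a b X M + c * loopI k s t a b Y M := by
  unfold loopI
  have h1 : (s.map fun m => (m * trace ((X + c • Y) * (M : Matrix (Fin n) (Fin n) ℂ) ^ m)) * PW (s.erase m) M).sum
    = (s.map fun m => (m * trace (X * (M : Matrix (Fin n) (Fin n) ℂ) ^ m)) * PW (s.erase m) M).sum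
    + c * (s.map fun m => (m * trace (Y * (M : Matrix (Fin n) (Fin n) ℂ) ^ m)) * PW (s.erase m) M).sum := by
    rw [← Multiset.sum_map_mul_left, ← Multiset.sum_map_add]
    congr 2; funext m
    rw [add_mul, trace_add, smul_mul_assoc, trace_smul, smul_eq_mul]; ring
  have h2 : (t.map fun m => (-(m * trace ((X + c • Y) * star (M : Matrix (Fin n) (Fin n) ℂ) ^ m))) * QW (t.erase m) M).sum
    = (t.map fun m => (-(m * trace (X * star (M : Matrix (Fin n) (Fin n) ℂ) ^ m))) * QW (t.erase m) M).sum
    + c * (t.map fun m => (-(m * trace (Y * star (M : Matrix (Fin n) (Fin n) ℂ) ^ m))) * QW (t.erase m) M).sum := by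
    rw [← Multiset.sum_map_mul_left, ← Multiset.sum_map_add]
    congr 2; funext m
    rw [add_mul, trace_add, smul_mul_assoc, trace_smul, smul_eq_mul]; ring
  rw [h1, h2, dpow_add_smul]
  simp only [Matrix.add_apply, Matrix.smul_apply, smul_eq_mul]
  ring

variable (μ : Measure (unitaryGroup (Fin n) ℂ)) [IsProbabilityMeasure μ] [μ.IsHaarMeasure]

lemma integral_loopI_skew (k : ℕ) (s t : Multiset ℕ) (a b : Fin n)
    (X : Matrix (Fin n) (Fin n) ℂ) (hX : X ∈ skewAdjoint (Matrix (Fin n) (Fin n) ℂ)) :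
    ∫ M, loopI k s t a b X M ∂μ = 0 := by
  apply integral_deriv_zero μ X hX
    (fun M => ((M : Matrix (Fin n) (Fin n) ℂ) ^ k) a b * (PW s M * QW t M)) _ (by fun_prop)
    (continuous_loopI k s t a b X)
  intro M
  have h1 := entry_hasDerivAt (hasDerivAt_pow_curve X M _ (by rw [uexp_zero]; rfl) (uexp_deriv X hX) k) a b
  have h2 := hasDerivAt_mprod s (fun k t => pw k (uexp X hX t * M)) _ 0 (pw_deriv X hX M)
  have h3 := hasDerivAt_mprod t (fun k t => qw k (uexp X hX t * M)) _ 0 (qw_deriv X hX M)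
  refine (h1.mul (h2.mul h3)).congr_deriv ?_
  simp only [loopI, PW, QW, Pi.mul_apply, uexp_zero, one_mul, OneMemClass.coe_one]

lemma integral_loopI (k : ℕ) (s t : Multiset ℕ) (a b : Fin n)
    (X : Matrix (Fin n) (Fin n) ℂ) :
    ∫ M, loopI k s t a b X M ∂μ = 0 := by
  have h1 : (1 / 2 : ℂ) • (X - Xᴴ) ∈ skewAdjoint (Matrix (Fin n) (Fin n) ℂ) := by
    rw [skewAdjoint.mem_iff, star_eq_conjTranspose]
    ext i j; simp; ring
  have h2 : (-Complex.I / 2 : ℂ) • (X + Xᴴ) ∈ skewAdjoint (Matrix (Fin n) (Fin n) ℂ) := by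
    rw [skewAdjoint.mem_iff, star_eq_conjTranspose]
    ext i j; simp; ring
  have hX : X = (1 / 2 : ℂ) • (X - Xᴴ) + Complex.I • ((-Complex.I / 2 : ℂ) • (X + Xᴴ)) := by
    ext i j; simp; ring_nf; simp; ring
  rw [hX]
  simp only [loopI_add_smul]
  rw [integral_add (integrable_cont μ (continuous_loopI ..))
    ((integrable_cont μ (continuous_loopI ..)).const_mul _), integral_const_mul,
    integral_loopI_skew μ _ _ _ _ _ _ h1, integral_loopI_skew μ _ _ _ _ _ _ h2]
  simp

end Analysis

/-! ## The loop equation -/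
section Loop

variable {n : ℕ} (μ : Measure (unitaryGroup (Fin n) ℂ)) [IsProbabilityMeasure μ] [μ.IsHaarMeasure]

/-- The mixed moments. -/
noncomputable def EW (s t : Multiset ℕ) : ℂ := ∫ M, PW s M * QW t M ∂μ

lemma integral_msum (s : Multiset ℕ) (f : ℕ → unitaryGroup (Fin n) ℂ → ℂ)
    (hf : ∀ m, Continuous (f m)) :
    ∫ M, (s.map fun m : ℕ => (m : ℂ) * f m M).sum ∂μ
      = (s.map fun m : ℕ => (m : ℂ) * ∫ M, f m M ∂μ).sum := by
  induction s using Multiset.induction with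
  | empty => simp
  | cons a s ih =>
    simp only [Multiset.map_cons, Multiset.sum_cons]
    rw [integral_add, ih, integral_const_mul]
    · exact integrable_cont μ (by fun_prop)
    · exact integrable_cont μ (cont_msum s _ fun i => by fun_prop)

lemma sum_single_mul (A B : Matrix (Fin n) (Fin n) ℂ) :
    ∑ a, ∑ b, (A * single a b (1 : ℂ) * B : Matrix (Fin n) (Fin n) ℂ) a b = trace A * trace B := by
  have : ∀ a b, (A * single a b (1 : ℂ) * B) a b = A a a * B b b := by
    intro a b
    simp [Matrix.mul_apply, Matrix.single_apply, ite_and]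
  simp only [this]
  simp only [trace, diag, Finset.sum_mul_sum]

lemma sum_trace_single (A B : Matrix (Fin n) (Fin n) ℂ) :
    ∑ a, ∑ b, A a b * trace (single a b (1 : ℂ) * B) = trace (A * B) := by
  have : ∀ a b, trace (single a b (1 : ℂ) * B) = B b a := by
    intro a b
    simp [trace, Matrix.mul_apply, Matrix.single_apply, ite_and]
  simp only [this]
  simp only [trace, diag, Matrix.mul_apply]

lemma sum_msum (A : Matrix (Fin n) (Fin n) ℂ) (s : Multiset ℕ)
    (B : ℕ → Matrix (Fin n) (Fin n) ℂ) (c : ℕ → ℂ) :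
    ∑ a, ∑ b, A a b * (s.map fun m : ℕ => ((m : ℂ) * trace (single a b (1 : ℂ) * B m)) * c m).sum
      = (s.map fun m : ℕ => (m : ℂ) * (trace (A * B m) * c m)).sum := by
  induction s using Multiset.induction with
  | empty => simp
  | cons x s ih =>
    simp only [Multiset.map_cons, Multiset.sum_cons, mul_add, Finset.sum_add_distrib]
    rw [ih, ← sum_trace_single, Finset.sum_mul, Finset.mul_sum]
    congr 1
    apply Finset.sum_congr rfl
    intro a _
    rw [Finset.sum_mul, Finset.mul_sum]
    apply Finset.sum_congr rfl
    intro b _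
    ring

lemma sum_loopI (k : ℕ) (s t : Multiset ℕ) (M : unitaryGroup (Fin n) ℂ) :
    ∑ a, ∑ b, loopI k s t a b (single a b 1) M
      = (∑ l ∈ Finset.range k, PW (l ::ₘ (k - l) ::ₘ s) M * QW t M)
      + (s.map fun m : ℕ => (m : ℂ) * (PW ((k + m) ::ₘ s.erase m) M * QW t M)).sum
      - (t.map fun m : ℕ => (m : ℂ) * (trace ((M : Matrix (Fin n) (Fin n) ℂ) ^ k *
          star (M : Matrix (Fin n) (Fin n) ℂ) ^ m) * (PW s M * QW (t.erase m) M))).sum := by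
  have e1 : ∑ a, ∑ b, dpow (single a b 1) (M : Matrix (Fin n) (Fin n) ℂ) k a b * (PW s M * QW t M)
      = ∑ l ∈ Finset.range k, PW (l ::ₘ (k - l) ::ₘ s) M * QW t M := by
    have : ∑ a, ∑ b, dpow (single a b 1) (M : Matrix (Fin n) (Fin n) ℂ) k a b
        = ∑ l ∈ Finset.range k, pw l M * pw (k - l) M := by
      simp only [dpow, Matrix.sum_apply, pw, ← sum_single_mul]
      rw [Finset.sum_comm]
      conv_rhs => rw [Finset.sum_comm]
      rw [Finset.sum_comm]
      apply Finset.sum_congr rfl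
      intro a _
      rw [Finset.sum_comm]
    simp only [← Finset.sum_mul]
    rw [this]
    simp only [PW_cons, Finset.sum_mul]
    exact Finset.sum_congr rfl fun _ _ => by ring
  have e2 := sum_msum ((M : Matrix (Fin n) (Fin n) ℂ) ^ k) s
    (fun m => (M : Matrix (Fin n) (Fin n) ℂ) ^ m) (fun m => PW (s.erase m) M)
  have e3 := sum_msum ((M : Matrix (Fin n) (Fin n) ℂ) ^ k) t
    (fun m => star (M : Matrix (Fin n) (Fin n) ℂ) ^ m) (fun m => QW (t.erase m) M)
  have e2' : (s.map fun m : ℕ => (m : ℂ) * (PW ((k + m) ::ₘ s.erase m) M * QW t M)).sum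
      = (s.map fun m : ℕ => (m : ℂ) * (trace ((M : Matrix (Fin n) (Fin n) ℂ) ^ k *
          (M : Matrix (Fin n) (Fin n) ℂ) ^ m) * PW (s.erase m) M)).sum * QW t M := by
    rw [← Multiset.sum_map_mul_right]
    congr 2; funext m
    rw [PW_cons, pw, pow_add]; ring
  have e3' : (t.map fun m : ℕ => (m : ℂ) * (trace ((M : Matrix (Fin n) (Fin n) ℂ) ^ k *
          star (M : Matrix (Fin n) (Fin n) ℂ) ^ m) * (PW s M * QW (t.erase m) M))).sum
      = PW s M * (t.map fun m : ℕ => (m : ℂ) * (trace ((M : Matrix (Fin n) (Fin n) ℂ) ^ k *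
          star (M : Matrix (Fin n) (Fin n) ℂ) ^ m) * QW (t.erase m) M)).sum := by
    rw [← Multiset.sum_map_mul_left]
    congr 2; funext m
    ring
  rw [e2', e3', ← e1, ← e2, ← e3, Finset.sum_mul, Finset.mul_sum, ← Finset.sum_add_distrib,
    ← Finset.sum_sub_distrib]
  apply Finset.sum_congr rfl
  intro a _
  rw [Finset.sum_mul, Finset.mul_sum, ← Finset.sum_add_distrib, ← Finset.sum_sub_distrib]
  apply Finset.sum_congr rfl
  intro b _
  have e4 : (t.map fun m : ℕ => (-((m : ℂ) * trace (single a b 1 * star (M : Matrix (Fin n) (Fin n) ℂ) ^ m)))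
        * QW (t.erase m) M).sum = -(t.map fun m : ℕ => ((m : ℂ) * trace (single a b 1 *
          star (M : Matrix (Fin n) (Fin n) ℂ) ^ m)) * QW (t.erase m) M).sum := by
    rw [← Multiset.sum_map_neg]
    simp only [neg_mul]
  rw [loopI, e4]
  ring

lemma unitary_pow_mul (M : unitaryGroup (Fin n) ℂ) (m : ℕ) :
    (M : Matrix (Fin n) (Fin n) ℂ) ^ m * star (M : Matrix (Fin n) (Fin n) ℂ) ^ m = 1 := by
  have h1 : (M : Matrix (Fin n) (Fin n) ℂ) * star (M : Matrix (Fin n) (Fin n) ℂ) = 1 :=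
    mem_unitaryGroup_iff.1 M.2
  have h2 : star (M : Matrix (Fin n) (Fin n) ℂ) * (M : Matrix (Fin n) (Fin n) ℂ) = 1 :=
    mem_unitaryGroup_iff'.1 M.2
  have hc : Commute (M : Matrix (Fin n) (Fin n) ℂ) (star (M : Matrix (Fin n) (Fin n) ℂ)) := by
    rw [Commute, SemiconjBy, h1, h2]
  rw [← hc.mul_pow, h1, one_pow]

lemma integral_rhs (k m : ℕ) (s t : Multiset ℕ) :
    ∫ M, trace ((M : Matrix (Fin n) (Fin n) ℂ) ^ k *
          star (M : Matrix (Fin n) (Fin n) ℂ) ^ m) * (PW s M * QW (t.erase m) M) ∂μ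
      = rhsTerm n (EW μ) k s t m := by
  unfold rhsTerm EW
  split_ifs with h1 h2
  · congr 1; funext M
    rw [PW_cons, pw]
    have : (M : Matrix (Fin n) (Fin n) ℂ) ^ k = (M : Matrix (Fin n) (Fin n) ℂ) ^ (k - m) *
      (M : Matrix (Fin n) (Fin n) ℂ) ^ m := by rw [← pow_add]; congr 1; omega
    rw [this, mul_assoc (_ ^ (k - m)), unitary_pow_mul, mul_one]; ring
  · subst h2
    simp only [unitary_pow_mul, integral_const_mul]
    simp
  · congr 1; funext M
    rw [QW_cons, qw]
    have : star (M : Matrix (Fin n) (Fin n) ℂ) ^ m = star (M : Matrix (Fin n) (Fin n) ℂ) ^ k *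
      star (M : Matrix (Fin n) (Fin n) ℂ) ^ (m - k) := by rw [← pow_add]; congr 1; omega
    rw [this, ← mul_assoc (_ ^ k), unitary_pow_mul, one_mul]; ring

lemma EW_loop (k : ℕ) (hk : 0 < k) (s t : Multiset ℕ) : n * EW μ (k ::ₘ s) t
      + ∑ l ∈ Finset.Ico 1 k, EW μ (l ::ₘ (k - l) ::ₘ s) t
      + (s.map fun m : ℕ => (m : ℂ) * EW μ ((k + m) ::ₘ s.erase m) t).sum
      = (t.map fun m : ℕ => (m : ℂ) * rhsTerm n (EW μ) k s t m).sum := by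
  have h0 : ∫ M, ∑ a, ∑ b, loopI k s t a b (single a b 1) M ∂μ = 0 := by
    rw [integral_finsetSum]
    · apply Finset.sum_eq_zero
      intro a _
      rw [integral_finsetSum]
      · exact Finset.sum_eq_zero fun b _ => integral_loopI μ k s t a b _
      · exact fun b _ => integrable_cont μ (continuous_loopI ..)
    · exact fun a _ => integrable_cont μ (continuous_finsetSum _ fun b _ => continuous_loopI ..)
  simp only [sum_loopI] at h0
  have c1 : Continuous fun M : unitaryGroup (Fin n) ℂ =>
      ∑ l ∈ Finset.range k, PW (l ::ₘ (k - l) ::ₘ s) M * QW t M := by fun_prop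
  have c2 : Continuous fun M : unitaryGroup (Fin n) ℂ =>
      (s.map fun m : ℕ => (m : ℂ) * (PW ((k + m) ::ₘ s.erase m) M * QW t M)).sum :=
    cont_msum s _ fun i => by fun_prop
  have c3 : Continuous fun M : unitaryGroup (Fin n) ℂ =>
      (t.map fun m : ℕ => (m : ℂ) * (trace ((M : Matrix (Fin n) (Fin n) ℂ) ^ k *
          star (M : Matrix (Fin n) (Fin n) ℂ) ^ m) * (PW s M * QW (t.erase m) M))).sum :=
    cont_msum t _ fun i => by fun_prop
  rw [integral_sub (integrable_cont μ (c1.fun_add c2)) (integrable_cont μ c3),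
    integral_add (integrable_cont μ c1) (integrable_cont μ c2),
    integral_msum μ s _ (fun m => by fun_prop), integral_msum μ t _ (fun m => by fun_prop),
    integral_finsetSum _ (fun l _ => integrable_cont μ (by fun_prop))] at h0
  simp only [integral_rhs] at h0
  rw [Finset.range_eq_Ico, Finset.sum_eq_sum_Ico_succ_bot hk] at h0
  have hz : ∫ M, PW (0 ::ₘ (k - 0) ::ₘ s) M * QW t M ∂μ = n * EW μ (k ::ₘ s) t := by
    rw [EW, ← integral_const_mul]
    congr 1; funext M
    rw [PW_cons, pw_zero, Nat.sub_zero, mul_assoc]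
  rw [hz] at h0
  exact sub_eq_zero.1 h0

lemma EW_base (t : Multiset ℕ) (ht : ∀ m ∈ t, 0 < m) : EW μ 0 t = gmom 0 t := by
  by_cases h : t = 0
  · subst h
    simp [EW, gmom, zfac_zero, PW, QW]
  rw [gmom, if_neg (Ne.symm h)]
  have hd : 0 < t.sum := by
    obtain ⟨a, ha⟩ := Multiset.exists_mem_of_ne_zero h
    have := Multiset.le_sum_of_mem ha
    have := ht a ha
    omega
  obtain ⟨c, hc1, hc2⟩ : ∃ c : ℂ, c * star c = 1 ∧ (star c) ^ t.sum = -1 := by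
    refine ⟨Complex.exp (-((Real.pi / t.sum : ℝ) * Complex.I)), ?_, ?_⟩
    · rw [Complex.star_def, ← Complex.exp_conj, ← Complex.exp_add]
      simp
    · rw [Complex.star_def, ← Complex.exp_conj, ← Complex.exp_nat_mul, ← Complex.exp_pi_mul_I]
      congr 1
      have : (t.sum : ℂ) ≠ 0 := by exact_mod_cast hd.ne'
      simp only [map_neg, map_mul, Complex.conj_ofReal, Complex.conj_I]
      simp only [Complex.ofReal_div, Complex.ofReal_natCast]
      field_simp
  let g : unitaryGroup (Fin n) ℂ := ⟨c • 1, by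
    rw [mem_unitaryGroup_iff, star_smul, smul_mul_smul_comm, hc1]; simp⟩
  have hq : ∀ k (M : unitaryGroup (Fin n) ℂ), qw k (g * M) = (star c) ^ k * qw k M := by
    intro k M
    have : ((g * M : unitaryGroup (Fin n) ℂ) : Matrix (Fin n) (Fin n) ℂ) = c • (M : Matrix (Fin n) (Fin n) ℂ) := by
      change (c • 1) * (M : Matrix (Fin n) (Fin n) ℂ) = _
      rw [smul_mul_assoc, one_mul]
    rw [qw, this, star_smul, smul_pow, trace_smul, smul_eq_mul, qw]
  have hQ : ∀ (u : Multiset ℕ) (M : unitaryGroup (Fin n) ℂ), QW u (g * M) = (star c) ^ u.sum * QW u M := by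
    intro u M
    induction u using Multiset.induction with
    | empty => simp [QW]
    | cons a u ih => rw [QW_cons, QW_cons, ih, hq, Multiset.sum_cons, pow_add]; ring
  have h1 : ∫ M, QW t (g * M) ∂μ = ∫ M, QW t M ∂μ := integral_mul_left_eq_self (QW t) g
  simp only [hQ, hc2, neg_mul, one_mul, integral_neg] at h1
  have h2 : EW μ 0 t = ∫ M, QW t M ∂μ := by simp [EW, PW]
  rw [h2]
  linear_combination (-1 / 2 : ℂ) * h1

lemma EW_eq (s t : Multiset ℕ) (hs : ∀ m ∈ s, 0 < m) (ht : ∀ m ∈ t, 0 < m) (h : s.sum ≤ n) :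
    EW μ s t = gmom s t :=
  loop_unique n (EW μ) (EW_base μ) (fun k hk s t => EW_loop μ k hk s t) s.sum h s hs rfl t ht

lemma zfac_replicate (a j : ℕ) : zfac (Multiset.replicate a j) = j ^ a * a.factorial := by
  induction a with
  | zero => simp [zfac_zero]
  | succ a ih =>
    rw [Multiset.replicate_succ, zfac_cons, ih, Multiset.count_replicate_self, Nat.factorial_succ]
    push_cast; ring

lemma moment_eq (j : ℕ) (hj : 0 < j) (a b : ℕ) (h : a * j ≤ n) :
    ∫ M, pw j M ^ a * qw j M ^ b ∂μ = if a = b then (j : ℂ) ^ a * a.factorial else 0 := by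
  have := EW_eq μ (Multiset.replicate a j) (Multiset.replicate b j)
    (fun m hm => by rw [Multiset.eq_of_mem_replicate hm]; exact hj)
    (fun m hm => by rw [Multiset.eq_of_mem_replicate hm]; exact hj) (by simpa using h)
  simp only [EW, PW, QW, Multiset.map_replicate, Multiset.prod_replicate] at this
  rw [this, gmom, zfac_replicate]
  congr 1
  simp only [eq_iff_iff]
  constructor
  · intro h; simpa using congrArg Multiset.card h
  · rintro rfl; rfl

lemma moment_sum (j : ℕ) (hj : 0 < j) (k : ℕ) (h : k * j ≤ n) :
    ∫ M, (pw j M + qw j M) ^ k ∂μ = ∑ i ∈ Finset.range (k + 1),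
      (if i = k - i then (j : ℂ) ^ i * i.factorial else 0) * (k.choose i) := by
  simp only [add_pow]
  rw [integral_finsetSum _ (fun l _ => integrable_cont μ (by fun_prop))]
  apply Finset.sum_congr rfl
  intro i hi
  rw [Finset.mem_range] at hi
  rw [integral_mul_const, moment_eq μ j hj]
  exact (Nat.mul_le_mul_right j (by omega)).trans h

end Loop

/-- For `4j ≤ n` and Haar-distributed `M` in `U(n,ℂ)`, the first four moments of
`W = (Tr(M^j) + conj(Tr(M^j)))/√(2j)` (a real number, recorded via the real part) match
those of a standard normal: `E[W] = 0`, `E[W²] = 1`, `E[W³] = 0`, `E[W⁴] = 3`. -/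
theorem u_four_moments (n j : ℕ) (hn : 0 < n) (hj : 0 < j) (h : 4 * j ≤ n)
    (μ : Measure (Matrix.unitaryGroup (Fin n) ℂ)) [IsProbabilityMeasure μ]
    [μ.IsHaarMeasure]
    (W : Matrix.unitaryGroup (Fin n) ℂ → ℝ)
    (hW : W = fun M => (trU M j + (starRingEnd ℂ) (trU M j)).re / Real.sqrt (2 * j)) :
    (∫ M, W M ∂μ = 0) ∧ (∫ M, (W M) ^ 2 ∂μ = 1) ∧
      (∫ M, (W M) ^ 3 ∂μ = 0) ∧ (∫ M, (W M) ^ 4 ∂μ = 3) := by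
  have hWc : ∀ M, ((W M : ℝ) : ℂ) = (pw j M + qw j M) * ((Real.sqrt (2 * j) : ℝ) : ℂ)⁻¹ := by
    intro M
    have hT : trU M j = pw j M := by
      rw [trU, pw, zpow_natCast]; rfl
    rw [hW, qw_eq]
    simp only [hT]
    rw [Complex.ofReal_div, div_eq_mul_inv]
    congr 1
    rw [Complex.add_conj]
    simp
  have key : ∀ k, k ≤ 4 → ((∫ M, (W M) ^ k ∂μ : ℝ) : ℂ) = (∑ i ∈ Finset.range (k + 1),
      (if i = k - i then (j : ℂ) ^ i * i.factorial else 0) * (k.choose i)) *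
        (((Real.sqrt (2 * j) : ℝ) : ℂ)⁻¹) ^ k := by
    intro k hk
    rw [← moment_sum μ j hj k ((Nat.mul_le_mul_right j hk).trans h), ← integral_mul_const,
      ← integral_complex_ofReal]
    congr 1; funext M
    rw [Complex.ofReal_pow, hWc, mul_pow]
  have hj0 : (j : ℂ) ≠ 0 := by exact_mod_cast hj.ne'
  have hs : ((Real.sqrt (2 * j) : ℝ) : ℂ) ^ 2 = 2 * j := by
    rw [← Complex.ofReal_pow, Real.sq_sqrt (by positivity)]; push_cast; ring
  have hs4 : ((Real.sqrt (2 * j) : ℝ) : ℂ) ^ 4 = 4 * j ^ 2 := by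
    have : ((Real.sqrt (2 * j) : ℝ) : ℂ) ^ 4 = (((Real.sqrt (2 * j) : ℝ) : ℂ) ^ 2) ^ 2 := by ring
    rw [this, hs]; ring
  have k1 := key 1 (by norm_num)
  have k2 := key 2 (by norm_num)
  have k3 := key 3 (by norm_num)
  have k4 := key 4 (by norm_num)
  rw [inv_pow, hs] at k2
  rw [inv_pow, hs4] at k4
  simp only [Finset.sum_range_succ, Finset.sum_range_zero] at k1 k2 k3 k4
  refine ⟨?_, ?_, ?_, ?_⟩
  · apply Complex.ofReal_injective
    simpa using k1
  · apply Complex.ofReal_injective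
    rw [k2]
    simp
    field_simp
  · apply Complex.ofReal_injective
    rw [k3]; simp
  · apply Complex.ofReal_injective
    rw [k4]
    simp [Nat.choose, Nat.factorial]
    field_simp
    norm_num
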